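/- Let G be a finite simple graph with m edges such that f_2(G) ≥ m/2 + (1/4)·h(m) + 1/4. Then G admits a 2-partition (V_1, V_2) such that (i) max{e(V_1), e(V_2)} ≤ m/4 + (1/8)·h(m), and (ii) e(V_1, V_2) ≥ m/2 + (1/4)·h(m) + 1/4. -/

import Mathlib

open Finset

noncomputable def hfun (x : ℝ) : ℝ := Real.sqrt (2 * x + 1 / 4) - 1 / 2

variable {V : Type*} [Fintype V] [DecidableEq V]

/-- Number of edges of `G` with both endpoints in `S`. -/
def eIn (G : SimpleGraph V) [DecidableRel G.Adj] (S : Finset V) : ℕ :=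
  (Finset.univ.filter (fun p : V × V => G.Adj p.1 p.2 ∧ p.1 ∈ S ∧ p.2 ∈ S)).card / 2

/-- Number of edges of `G` with one endpoint in `S` and the other in `T` (for disjoint `S`, `T`). -/
def eCross (G : SimpleGraph V) [DecidableRel G.Adj] (S T : Finset V) : ℕ :=
  (Finset.univ.filter (fun p : V × V => G.Adj p.1 p.2 ∧ p.1 ∈ S ∧ p.2 ∈ T)).card

/-- `P` is a partition of the vertex set into `k` pairwise disjoint (possibly empty) parts. -/
def IsKPartition {k : ℕ} (P : Fin k → Finset V) : Prop :=
  (∀ i j : Fin k, i ≠ j → Disjoint (P i) (P j)) ∧ ∀ v : V, ∃ i, v ∈ P i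

/-- The number of crossing edges of a `k`-partition. -/
def crossTotal (G : SimpleGraph V) [DecidableRel G.Adj] {k : ℕ} (P : Fin k → Finset V) : ℕ :=
  ∑ i : Fin k, ∑ j : Fin k, if i < j then eCross G (P i) (P j) else 0

/-- `f_k(G)`: the maximum number of crossing edges over all `k`-partitions of `G`. -/
noncomputable def maxCut (G : SimpleGraph V) [DecidableRel G.Adj] (k : ℕ) : ℕ :=
  sSup {n : ℕ | ∃ P : Fin k → Finset V, IsKPartition P ∧ crossTotal G P = n}

/-!
Write `h(m) = 2a`, so that `m = a(2a + 1)`; we want a cut of size at least `(a + 1/2)²` whose sides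
`S` satisfy `2e(S) ≤ a² + a`. Start from a maximum cut `(A, B)`: one of its sides, say `B`, is
sparse enough, and every `v ∈ A` has nonnegative excess `d_B(v) - d_A(v)`. As long as `A` is too
dense, some vertex of `A` can be moved to `B` while the cut stays large and `B` stays sparse.

To find it, write the size of the cut as `(a + 1/2)² + s`, let `t = a + 1/4 + s`, and suppose that
no vertex can be moved. Then every `v ∈ A` of excess at most `s` has `d_B(v) > t`. Let `u` have
maximum excess among the vertices with a neighbour in `A`. The excesses are integers with sum less
than `s + 1/4`, so every vertex other than `u` has excess at most `s`. In particular a neighbour of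
`u` in `A` has more than `t - s` neighbours in `A`, so more than `t - s` nonisolated vertices of
`G[A]` besides `u` each send more than `t` edges to `B`. Together with the edges from `u` to `B`,
these are more than `(a + 1/2)² + s` edges.
-/

section Counting

variable (G : SimpleGraph V) [DecidableRel G.Adj]

/-- The degree `d_S(v)` of a vertex `v` into a vertex set `S`; `v` may or may not belong to `S`. -/
def degreeInto (v : V) (S : Finset V) : ℕ := #{w ∈ S | G.Adj v w}

omit [Fintype V] [DecidableEq V] in
lemma degreeInto_mono (v : V) {S T : Finset V} (hST : S ⊆ T) :
    degreeInto G v S ≤ degreeInto G v T :=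
  card_le_card (filter_subset_filter _ hST)

omit [Fintype V] in
lemma degreeInto_erase_self (v : V) (S : Finset V) :
    degreeInto G v (S.erase v) = degreeInto G v S := by
  rw [degreeInto, filter_erase, erase_eq_of_notMem (by simp), degreeInto]

lemma degreeInto_add_degreeInto_compl (v : V) (S : Finset V) :
    degreeInto G v S + degreeInto G v Sᶜ = G.degree v := by
  rw [degreeInto, degreeInto, card_filter, card_filter, sum_add_sum_compl, ← card_filter,
    ← G.card_neighborFinset_eq_degree, G.neighborFinset_eq_filter]

lemma sum_degreeInto (S T : Finset V) : ∑ v ∈ S, degreeInto G v T = eCross G S T := by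
  simp only [degreeInto, eCross, card_filter]
  rw [← sum_product', ← card_filter, ← card_filter]
  congr 1
  ext p
  simp only [mem_filter, mem_product, mem_univ, true_and]
  tauto

lemma eCross_comm (S T : Finset V) : eCross G S T = eCross G T S := by
  simp only [← sum_degreeInto, degreeInto, card_filter]
  rw [sum_comm]
  simp only [G.adj_comm]

lemma eCross_erase_left_add {v : V} {S : Finset V} (hv : v ∈ S) (T : Finset V) :
    eCross G (S.erase v) T + degreeInto G v T = eCross G S T := by
  simp only [← sum_degreeInto, sum_erase_add _ _ hv]

lemma eCross_insert_left {v : V} {S : Finset V} (hv : v ∉ S) (T : Finset V) :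
    eCross G (insert v S) T = degreeInto G v T + eCross G S T := by
  simp only [← sum_degreeInto, sum_insert hv]

lemma eCross_insert_right {v : V} {T : Finset V} (hv : v ∉ T) (S : Finset V) :
    eCross G S (insert v T) = degreeInto G v S + eCross G S T := by
  rw [eCross_comm, eCross_insert_left G hv, eCross_comm]

/-- The excess `d_{Sᶜ}(v) - d_S(v)`: for `v ∈ S`, the number of edges that the cut `(S, Sᶜ)` loses
when `v` is moved to the other side. It is integer-valued since it may be negative. -/
def excess (S : Finset V) (v : V) : ℤ := degreeInto G v Sᶜ - degreeInto G v S

lemma excess_anti (v : V) {S T : Finset V} (hST : S ⊆ T) : excess G T v ≤ excess G S v :=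
  sub_le_sub (mod_cast degreeInto_mono G v (compl_subset_compl.2 hST))
    (mod_cast degreeInto_mono G v hST)

lemma sum_excess (S : Finset V) :
    ∑ v ∈ S, excess G S v = (eCross G S Sᶜ : ℤ) - eCross G S S := by
  simp only [excess, sum_sub_distrib, ← sum_degreeInto, Nat.cast_sum]

lemma eCross_erase_compl {v : V} {S : Finset V} (hv : v ∈ S) :
    (eCross G (S.erase v) (S.erase v)ᶜ : ℤ) = eCross G S Sᶜ - excess G S v := by
  have hv' : v ∉ Sᶜ := by simpa using hv
  rw [compl_erase, eCross_insert_right G hv', degreeInto_erase_self,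
    ← eCross_erase_left_add G hv Sᶜ, excess]
  push_cast
  ring

lemma excess_nonneg_of_maximal {S : Finset V} (hmax : ∀ T, eCross G T Tᶜ ≤ eCross G S Sᶜ) {v : V}
    (hv : v ∈ S) : 0 ≤ excess G S v := by
  have hmove := eCross_erase_compl G hv
  have hle := hmax (S.erase v)
  lia

lemma eCross_compl_erase_self {v : V} {S : Finset V} (hv : v ∈ S) :
    eCross G (S.erase v)ᶜ (S.erase v)ᶜ = eCross G Sᶜ Sᶜ + 2 * degreeInto G v Sᶜ := by
  have hv' : v ∉ Sᶜ := by simpa using hv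
  have hself : degreeInto G v (insert v Sᶜ) = degreeInto G v Sᶜ := by
    rw [← degreeInto_erase_self, erase_insert hv']
  rw [compl_erase, eCross_insert_left G hv', eCross_insert_right G hv', hself]
  ring

-- `eCross G S S` counts ordered pairs, hence equals twice the number of edges inside `S`.
lemma eCross_self_add_compl_self_add (S : Finset V) :
    eCross G S S + eCross G Sᶜ Sᶜ + 2 * eCross G S Sᶜ = 2 * #G.edgeFinset := by
  have hsplit : ∑ v, G.degree v =
      (eCross G S S + eCross G S Sᶜ) + (eCross G Sᶜ S + eCross G Sᶜ Sᶜ) := by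
    simp only [← degreeInto_add_degreeInto_compl G _ S, ← sum_degreeInto, ← sum_add_distrib,
      sum_add_sum_compl]
  rw [← G.sum_degrees_eq_twice_card_edges, hsplit, eCross_comm G Sᶜ S]
  ring

lemma eIn_le_eCross_self_div_two (S : Finset V) : (eIn G S : ℝ) ≤ eCross G S S / 2 :=
  Nat.cast_div_le

end Counting

section Nonisolated

variable (G : SimpleGraph V) [DecidableRel G.Adj]

/-- The vertices of `S` that have a neighbour in `S`, i.e. the nonisolated vertices of the subgraph
induced on `S`. -/
def nonisolatedIn (S : Finset V) : Finset V := {v ∈ S | 0 < degreeInto G v S}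

variable {G}

omit [Fintype V] [DecidableEq V] in
lemma mem_nonisolatedIn {S : Finset V} {v : V} :
    v ∈ nonisolatedIn G S ↔ v ∈ S ∧ ∃ w ∈ S, G.Adj v w := by
  simp [nonisolatedIn, degreeInto, card_pos, filter_nonempty_iff]

lemma nonisolatedIn_nonempty {S : Finset V} (hS : 0 < eCross G S S) :
    (nonisolatedIn G S).Nonempty := by
  rw [← sum_degreeInto] at hS
  obtain ⟨v, hv, hpos⟩ := (sum_pos_iff_of_nonneg fun _ _ ↦ Nat.zero_le _).1 hS
  exact ⟨v, mem_filter.2 ⟨hv, hpos⟩⟩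

omit [Fintype V] in
lemma degreeInto_le_card_nonisolatedIn_erase {S : Finset V} {v : V} (hv : v ∈ S) :
    degreeInto G v S ≤ #((nonisolatedIn G S).erase v) := by
  refine card_le_card fun w hw ↦ ?_
  obtain ⟨hwS, hvw⟩ := mem_filter.1 hw
  exact mem_erase.2 ⟨hvw.ne', mem_nonisolatedIn.2 ⟨hwS, v, hv, hvw.symm⟩⟩

lemma mul_add_degreeInto_le_eCross {S T : Finset V} {r t : ℝ} (ht : 0 ≤ t) {u : V}
    (hu : u ∈ nonisolatedIn G S)
    (hr : ∀ v ∈ nonisolatedIn G S, v ≠ u → r ≤ degreeInto G v S)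
    (hT : ∀ v ∈ nonisolatedIn G S, v ≠ u → t ≤ degreeInto G v T) :
    r * t + degreeInto G u T ≤ eCross G S T := by
  obtain ⟨huS, w, hwS, huw⟩ := mem_nonisolatedIn.1 hu
  have hw : w ∈ nonisolatedIn G S := mem_nonisolatedIn.2 ⟨hwS, u, huS, huw.symm⟩
  have hcard : r ≤ #((nonisolatedIn G S).erase u) := by
    refine (hr w hw huw.ne').trans ?_
    rw [card_erase_of_mem hu, ← card_erase_of_mem hw]
    exact_mod_cast degreeInto_le_card_nonisolatedIn_erase hwS
  calc r * t + degreeInto G u T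
      ≤ #((nonisolatedIn G S).erase u) * t + degreeInto G u T := by gcongr
    _ ≤ ∑ v ∈ (nonisolatedIn G S).erase u, (degreeInto G v T : ℝ) + degreeInto G u T := by
        rw [← nsmul_eq_mul]
        gcongr
        exact card_nsmul_le_sum _ _ _ fun v hv ↦ hT v (mem_of_mem_erase hv) (ne_of_mem_erase hv)
    _ = ∑ v ∈ nonisolatedIn G S, (degreeInto G v T : ℝ) := sum_erase_add _ _ hu
    _ ≤ ∑ v ∈ S, (degreeInto G v T : ℝ) :=
        sum_le_sum_of_subset_of_nonneg (filter_subset _ _) fun _ _ _ ↦ Nat.cast_nonneg _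
    _ = eCross G S T := by rw [← sum_degreeInto, Nat.cast_sum]

end Nonisolated

lemma cast_le_of_sum_lt_add_one {ι : Type*} {S : Finset ι} {f : ι → ℤ} {s : ℝ} (hs : 0 ≤ s)
    (hf : ∀ i ∈ S, 0 ≤ f i) (hsum : ((∑ i ∈ S, f i : ℤ) : ℝ) < s + 1) {i j : ι} (hi : i ∈ S)
    (hj : j ∈ S) (hne : i ≠ j) (hle : f j ≤ f i) : (f j : ℝ) ≤ s := by
  by_contra! hlt
  have hpos : 0 < f j := by exact_mod_cast hs.trans_lt hlt
  have hone : (1 : ℝ) ≤ f i := by exact_mod_cast (Int.add_one_le_of_lt hpos).trans hle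
  have hpair : (f i : ℝ) + f j ≤ (∑ k ∈ S, f k : ℤ) := by
    exact_mod_cast add_le_sum hf hi hj hne
  linarith

section Descent

variable {G : SimpleGraph V} [DecidableRel G.Adj]

lemma eCross_compl_erase_self_le {A : Finset V} {v : V} {a s : ℝ} (hv : v ∈ A)
    (hm : (#G.edgeFinset : ℝ) ≤ a * (2 * a + 1))
    (hcut : (a + 1 / 2) ^ 2 + s ≤ (eCross G A Aᶜ : ℝ))
    (hdense : a ^ 2 + a ≤ (eCross G A A : ℝ))
    (hlight : (degreeInto G v Aᶜ : ℝ) ≤ a + 1 / 4 + s) :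
    (eCross G (A.erase v)ᶜ (A.erase v)ᶜ : ℝ) ≤ a ^ 2 + a := by
  have htotal : (eCross G A A + eCross G Aᶜ Aᶜ + 2 * eCross G A Aᶜ : ℝ) = 2 * #G.edgeFinset :=
    mod_cast eCross_self_add_compl_self_add G A
  have hmove : (eCross G (A.erase v)ᶜ (A.erase v)ᶜ : ℝ) =
      eCross G Aᶜ Aᶜ + 2 * degreeInto G v Aᶜ := mod_cast eCross_compl_erase_self G hv
  linarith

lemma exists_erase_large_cut {A : Finset V} {a : ℝ} (ha : 0 ≤ a)
    (hm : (#G.edgeFinset : ℝ) ≤ a * (2 * a + 1))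
    (hcut : (a + 1 / 2) ^ 2 ≤ (eCross G A Aᶜ : ℝ)) (hdense : a ^ 2 + a < (eCross G A A : ℝ))
    (hexcess : ∀ v ∈ A, 0 ≤ excess G A v) :
    ∃ v ∈ A, (a + 1 / 2) ^ 2 ≤ (eCross G (A.erase v) (A.erase v)ᶜ : ℝ) ∧
      (eCross G (A.erase v)ᶜ (A.erase v)ᶜ : ℝ) ≤ a ^ 2 + a := by
  by_contra! hstuck
  obtain ⟨s, hs⟩ : ∃ s : ℝ, eCross G A Aᶜ = (a + 1 / 2) ^ 2 + s := ⟨_, (add_sub_cancel _ _).symm⟩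
  have hs₀ : 0 ≤ s := by linarith
  have hheavy (v) (hv : v ∈ A) (hvs : (excess G A v : ℝ) ≤ s) :
      a + 1 / 4 + s < degreeInto G v Aᶜ := by
    have hmove : (eCross G (A.erase v) (A.erase v)ᶜ : ℝ) = eCross G A Aᶜ - excess G A v :=
      mod_cast eCross_erase_compl G hv
    contrapose! hstuck
    exact ⟨v, hv, by linarith, eCross_compl_erase_self_le hv hm hs.ge hdense.le hstuck⟩
  have hsum : ((∑ v ∈ A, excess G A v : ℤ) : ℝ) < s + 1 / 4 := by
    rw [sum_excess]
    push_cast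
    linarith
  obtain ⟨u, hu, humax⟩ := exists_max_image (nonisolatedIn G A) (excess G A)
    (nonisolatedIn_nonempty (by exact_mod_cast (by positivity : 0 ≤ a ^ 2 + a).trans_lt hdense))
  have hN {v} (hv : v ∈ nonisolatedIn G A) : v ∈ A := filter_subset _ _ hv
  have hother (v) (hv : v ∈ nonisolatedIn G A) (hvu : v ≠ u) : (excess G A v : ℝ) ≤ s :=
    cast_le_of_sum_lt_add_one hs₀ hexcess (by linarith) (hN hu) (hN hv) hvu.symm (humax v hv)
  have hdeg (v) : (degreeInto G v Aᶜ : ℝ) = degreeInto G v A + excess G A v := by simp [excess]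
  have hcount : (a + 1 / 4) * (a + 1 / 4 + s) + degreeInto G u Aᶜ ≤ eCross G A Aᶜ :=
    mul_add_degreeInto_le_eCross (by positivity) hu
      (fun v hv hvu ↦ by linarith [hheavy v (hN hv) (hother v hv hvu), hother v hv hvu, hdeg v])
      (fun v hv hvu ↦ (hheavy v (hN hv) (hother v hv hvu)).le)
  rcases le_or_gt (excess G A u : ℝ) s with hus | hus
  · nlinarith [hheavy u (hN hu) hus, mul_nonneg ha hs₀]
  · have hone : (1 : ℝ) ≤ excess G A u := by exact_mod_cast hs₀.trans_lt hus
    have hle : (excess G A u : ℝ) ≤ (∑ v ∈ A, excess G A v : ℤ) := by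
      exact_mod_cast single_le_sum hexcess (hN hu)
    have hs_lb : 3 / 4 < s := by linarith
    nlinarith [hdeg u, mul_le_mul_of_nonneg_left hs_lb.le ha]

theorem exists_sparse_large_cut_of_excess_nonneg {a : ℝ} (ha : 0 ≤ a)
    (hm : (#G.edgeFinset : ℝ) ≤ a * (2 * a + 1)) (A : Finset V)
    (hcut : (a + 1 / 2) ^ 2 ≤ (eCross G A Aᶜ : ℝ)) (hsparse : (eCross G Aᶜ Aᶜ : ℝ) ≤ a ^ 2 + a)
    (hexcess : ∀ v ∈ A, 0 ≤ excess G A v) :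
    ∃ S : Finset V, (a + 1 / 2) ^ 2 ≤ (eCross G S Sᶜ : ℝ) ∧
      (eCross G S S : ℝ) ≤ a ^ 2 + a ∧ (eCross G Sᶜ Sᶜ : ℝ) ≤ a ^ 2 + a := by
  induction A using Finset.strongInduction with
  | H A ih =>
    by_cases hdense : (eCross G A A : ℝ) ≤ a ^ 2 + a
    · exact ⟨A, hcut, hdense, hsparse⟩
    obtain ⟨v, hv, hcut', hsparse'⟩ :=
      exists_erase_large_cut ha hm hcut (not_le.1 hdense) hexcess
    have hsub : A.erase v ⊆ A := erase_subset v A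
    exact ih _ (erase_ssubset hv) hcut' hsparse' fun w hw ↦
      (hexcess w (hsub hw)).trans (excess_anti G w hsub)

theorem exists_sparse_large_cut_of_maximal {a : ℝ} (ha : 0 ≤ a)
    (hm : (#G.edgeFinset : ℝ) ≤ a * (2 * a + 1)) {A : Finset V}
    (hcut : (a + 1 / 2) ^ 2 ≤ (eCross G A Aᶜ : ℝ))
    (hmax : ∀ T, eCross G T Tᶜ ≤ eCross G A Aᶜ) :
    ∃ S : Finset V, (a + 1 / 2) ^ 2 ≤ (eCross G S Sᶜ : ℝ) ∧
      (eCross G S S : ℝ) ≤ a ^ 2 + a ∧ (eCross G Sᶜ Sᶜ : ℝ) ≤ a ^ 2 + a := by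
  have hcomm : eCross G Aᶜ Aᶜᶜ = eCross G A Aᶜ := by rw [compl_compl, eCross_comm]
  have htotal : (eCross G A A + eCross G Aᶜ Aᶜ + 2 * eCross G A Aᶜ : ℝ) = 2 * #G.edgeFinset :=
    mod_cast eCross_self_add_compl_self_add G A
  have hside : (eCross G Aᶜ Aᶜ : ℝ) ≤ a ^ 2 + a ∨ (eCross G A A : ℝ) ≤ a ^ 2 + a := by
    by_contra! hdense
    linarith
  rcases hside with hsparse | hsparse
  · exact exists_sparse_large_cut_of_excess_nonneg ha hm A hcut hsparse
      fun _ ↦ excess_nonneg_of_maximal G hmax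
  · exact exists_sparse_large_cut_of_excess_nonneg ha hm Aᶜ (by rwa [hcomm])
      (by rwa [compl_compl])
      fun _ ↦ excess_nonneg_of_maximal G (by rwa [hcomm])

end Descent

section Partitions

omit [DecidableEq V] in
lemma isKPartition_update_empty_univ {k : ℕ} (i : Fin k) :
    IsKPartition (Function.update (fun _ ↦ ∅) i (univ : Finset V)) := by
  refine ⟨fun j l hjl ↦ ?_, fun v ↦ ⟨i, by simp⟩⟩
  rcases eq_or_ne j i with rfl | hj
  · simp [hjl.symm]
  · simp [hj]

lemma isKPartition_two_iff {P : Fin 2 → Finset V} : IsKPartition P ↔ P 1 = (P 0)ᶜ := by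
  simp only [IsKPartition, Fin.forall_fin_two, Fin.exists_fin_two, Finset.ext_iff, mem_compl,
    disjoint_left]
  grind

variable (G : SimpleGraph V) [DecidableRel G.Adj]

lemma crossTotal_two (P : Fin 2 → Finset V) : crossTotal G P = eCross G (P 0) (P 1) := by
  simp [crossTotal, Fin.sum_univ_two]

lemma finite_setOf_crossTotal (k : ℕ) :
    {n : ℕ | ∃ P : Fin k → Finset V, IsKPartition P ∧ crossTotal G P = n}.Finite :=
  (Set.finite_range (crossTotal G)).subset fun _ ⟨P, _, hP⟩ ↦ ⟨P, hP⟩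

variable {G}

lemma crossTotal_le_maxCut {k : ℕ} {P : Fin k → Finset V} (hP : IsKPartition P) :
    crossTotal G P ≤ maxCut G k :=
  le_csSup (finite_setOf_crossTotal G k).bddAbove ⟨P, hP, rfl⟩

variable (G) in
lemma exists_crossTotal_eq_maxCut (k : ℕ) [NeZero k] :
    ∃ P : Fin k → Finset V, IsKPartition P ∧ crossTotal G P = maxCut G k :=
  Set.Nonempty.csSup_mem (s := {n | ∃ P, IsKPartition P ∧ crossTotal G P = n})
    ⟨_, _, isKPartition_update_empty_univ 0, rfl⟩ (finite_setOf_crossTotal G k)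

variable (G) in
lemma exists_eCross_compl_eq_maxCut_two :
    ∃ A : Finset V, eCross G A Aᶜ = maxCut G 2 ∧ ∀ T, eCross G T Tᶜ ≤ eCross G A Aᶜ := by
  obtain ⟨P, hP, hPmax⟩ := exists_crossTotal_eq_maxCut G 2
  rw [crossTotal_two, isKPartition_two_iff.1 hP] at hPmax
  refine ⟨P 0, hPmax, fun T ↦ ?_⟩
  have hT := crossTotal_le_maxCut (G := G) (isKPartition_two_iff.2 rfl : IsKPartition ![T, Tᶜ])
  rwa [crossTotal_two, ← hPmax] at hT

end Partitions

lemma hfun_nonneg {x : ℝ} (hx : 0 ≤ x) : 0 ≤ hfun x :=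
  sub_nonneg.2 (Real.le_sqrt_of_sq_le (by linarith))

lemma hfun_mul_hfun_add_one {x : ℝ} (hx : -1 / 8 ≤ x) : hfun x * (hfun x + 1) = 2 * x := by
  have hsq := Real.sq_sqrt (show 0 ≤ 2 * x + 1 / 4 by linarith)
  rw [hfun]
  linarith

/-- If `f₂(G) ≥ m/2 + h(m)/4 + 1/4`, then `G` has a 2-partition with
`max{e(V₁),e(V₂)} ≤ m/4 + h(m)/8` and `e(V₁,V₂) ≥ m/2 + h(m)/4 + 1/4`. -/
theorem stmt_9 {V : Type*} [Fintype V] [DecidableEq V]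
    (G : SimpleGraph V) [DecidableRel G.Adj] (m : ℕ) (hm : m = G.edgeFinset.card)
    (hcut : (m : ℝ) / 2 + (1 / 4) * hfun m + 1 / 4 ≤ (maxCut G 2 : ℝ)) :
    ∃ P : Fin 2 → Finset V, IsKPartition P ∧
      (∀ i : Fin 2, (eIn G (P i) : ℝ) ≤ (m : ℝ) / 4 + (1 / 8) * hfun m) ∧
      (m : ℝ) / 2 + (1 / 4) * hfun m + 1 / 4 ≤ (crossTotal G P : ℝ) := by
  have hm₀ : (0 : ℝ) ≤ m := m.cast_nonneg
  obtain ⟨a, ha⟩ : ∃ a, hfun m = 2 * a := ⟨hfun m / 2, by ring⟩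
  have ha₀ : 0 ≤ a := by linarith [hfun_nonneg hm₀]
  have hma : (m : ℝ) = a * (2 * a + 1) := by
    linarith [ha ▸ hfun_mul_hfun_add_one (show -1 / 8 ≤ (m : ℝ) by linarith)]
  obtain ⟨A, hA, hmax⟩ := exists_eCross_compl_eq_maxCut_two G
  obtain ⟨S, hcutS, hS, hSc⟩ := exists_sparse_large_cut_of_maximal ha₀ (hm ▸ hma).le
    (by rw [hA]; linarith) hmax
  refine ⟨![S, Sᶜ], isKPartition_two_iff.2 rfl, Fin.forall_fin_two.2 ⟨?_, ?_⟩, ?_⟩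
  · change (eIn G S : ℝ) ≤ _
    linarith [eIn_le_eCross_self_div_two G S]
  · change (eIn G Sᶜ : ℝ) ≤ _
    linarith [eIn_le_eCross_self_div_two G Sᶜ]
  · rw [crossTotal_two]
    change _ ≤ (eCross G S Sᶜ : ℝ)
    linarith
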